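/- arXiv:1401.4209 — 4 statements merged into one kernel-verified Lean document; each statement's English description precedes it below -/
import Mathlib

section
/- Let J be a finite nonempty index set and let v : J → (Fin n → ℂ) be a family of nonzero vectors. Then the minimum, over all b : Fin n → ℂ satisfying v j ⬝ᵥ b ≠ 0 for every j ∈ J, of the number of nonzero entries ‖b‖₀ of b, equals the minimum cardinality of a set S ⊆ Fin n such that for every j ∈ J there exists k ∈ S with v j k ≠ 0; moreover both minima are attained. -/
open Matrix

/-!
The support of any vector non-orthogonal to every `v j` hits the support of every `v j`. Conversely,
if `S` hits the support of every `v j`, then the restrictions of the `v j` to `S` are nonzero, so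
they define finitely many nonzero linear forms. Over an infinite domain some vector `b` is a zero of
none of them, and restricting `b` to `S` changes none of the values.
-/

section Semiring

variable {ι R : Type*} [Fintype ι] [NonUnitalNonAssocSemiring R]

theorem exists_ne_zero_and_ne_zero_of_dotProduct_ne_zero {v b : ι → R}
    (h : v ⬝ᵥ b ≠ 0) : ∃ k, b k ≠ 0 ∧ v k ≠ 0 := by
  obtain ⟨k, -, hk⟩ := Finset.exists_ne_zero_of_sum_ne_zero h
  exact ⟨k, right_ne_zero_of_mul hk, left_ne_zero_of_mul hk⟩

theorem dotProduct_indicator (S : Set ι) (v b : ι → R) :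
    v ⬝ᵥ S.indicator b = S.indicator v ⬝ᵥ b := by
  classical
  simp [dotProduct, Set.indicator_apply]

end Semiring

section InfiniteDomain

variable {ι J R : Type*} [CommRing R] [IsDomain R] [Infinite R]

theorem exists_forall_eval_ne_zero [Finite J] (p : J → MvPolynomial ι R) (hp : ∀ j, p j ≠ 0) :
    ∃ b : ι → R, ∀ j, MvPolynomial.eval b (p j) ≠ 0 := by
  have := Fintype.ofFinite J
  have prod_ne_zero : ∏ j, p j ≠ 0 := Finset.prod_ne_zero_iff.mpr fun j _ => hp j
  by_contra! exists_eval_eq_zero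
  refine prod_ne_zero (MvPolynomial.funext fun b => ?_)
  obtain ⟨j, hj⟩ := exists_eval_eq_zero b
  rw [map_prod, map_zero]
  exact Finset.prod_eq_zero (Finset.mem_univ j) hj

variable [Fintype ι] [Finite J]

theorem exists_forall_dotProduct_ne_zero (v : J → ι → R) (hv : ∀ j, v j ≠ 0) :
    ∃ b : ι → R, ∀ j, v j ⬝ᵥ b ≠ 0 := by
  classical
  let linearForm (j : J) : MvPolynomial ι R := ∑ i, MvPolynomial.C (v j i) * MvPolynomial.X i
  have eval_linearForm (j : J) (b : ι → R) :
      MvPolynomial.eval b (linearForm j) = v j ⬝ᵥ b := by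
    simp [linearForm, dotProduct]
  have linearForm_ne_zero (j : J) : linearForm j ≠ 0 := by
    obtain ⟨k, hk⟩ := Function.ne_iff.mp (hv j)
    intro h
    have := eval_linearForm j (Pi.single k 1)
    rw [h, map_zero, dotProduct_single_one] at this
    exact hk this.symm
  obtain ⟨b, hb⟩ := exists_forall_eval_ne_zero linearForm linearForm_ne_zero
  exact ⟨b, fun j => eval_linearForm j b ▸ hb j⟩

theorem exists_support_subset_forall_dotProduct_ne_zero (v : J → ι → R) {S : Set ι}
    (hS : ∀ j, ∃ k ∈ S, v j k ≠ 0) :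
    ∃ b : ι → R, {i | b i ≠ 0} ⊆ S ∧ ∀ j, v j ⬝ᵥ b ≠ 0 := by
  have restrict_ne_zero (j : J) : S.indicator (v j) ≠ 0 := by
    obtain ⟨k, hkS, hk⟩ := hS j
    exact Function.ne_iff.mpr ⟨k, by rwa [Set.indicator_of_mem hkS]⟩
  obtain ⟨b, hb⟩ := exists_forall_dotProduct_ne_zero _ restrict_ne_zero
  exact ⟨S.indicator b, Set.support_indicator_subset, fun j => dotProduct_indicator S _ b ▸ hb j⟩

theorem stmt_4_general (v : J → ι → R) (hv : ∀ j, v j ≠ 0) :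
    sInf {m : ℕ | ∃ b : ι → R,
        (∀ j : J, v j ⬝ᵥ b ≠ 0) ∧ {i | b i ≠ 0}.ncard = m}
      = sInf {m : ℕ | ∃ S : Set ι,
        (∀ j : J, ∃ k ∈ S, v j k ≠ 0) ∧ S.ncard = m} ∧
    sInf {m : ℕ | ∃ b : ι → R,
        (∀ j : J, v j ⬝ᵥ b ≠ 0) ∧ {i | b i ≠ 0}.ncard = m}
      ∈ {m : ℕ | ∃ b : ι → R,
        (∀ j : J, v j ⬝ᵥ b ≠ 0) ∧ {i | b i ≠ 0}.ncard = m} ∧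
    sInf {m : ℕ | ∃ S : Set ι,
        (∀ j : J, ∃ k ∈ S, v j k ≠ 0) ∧ S.ncard = m}
      ∈ {m : ℕ | ∃ S : Set ι,
        (∀ j : J, ∃ k ∈ S, v j k ≠ 0) ∧ S.ncard = m} := by
  set sparsities := {m : ℕ | ∃ b : ι → R, (∀ j : J, v j ⬝ᵥ b ≠ 0) ∧ {i | b i ≠ 0}.ncard = m}
  set hittingCards := {m : ℕ | ∃ S : Set ι, (∀ j : J, ∃ k ∈ S, v j k ≠ 0) ∧ S.ncard = m}
  have sparsities_subset : sparsities ⊆ hittingCards := by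
    rintro _ ⟨b, hb, rfl⟩
    exact ⟨_, fun j => exists_ne_zero_and_ne_zero_of_dotProduct_ne_zero (hb j), rfl⟩
  have exists_sparsity_le : ∀ m ∈ hittingCards, ∃ s ∈ sparsities, s ≤ m := by
    rintro _ ⟨S, hS, rfl⟩
    obtain ⟨b, hbS, hb⟩ := exists_support_subset_forall_dotProduct_ne_zero v hS
    exact ⟨_, ⟨b, hb, rfl⟩, Set.ncard_le_ncard hbS⟩
  have sparsities_nonempty : sparsities.Nonempty := by
    obtain ⟨b, hb⟩ := exists_forall_dotProduct_ne_zero v hv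
    exact ⟨_, b, hb, rfl⟩
  have hittingCards_nonempty := sparsities_nonempty.mono sparsities_subset
  have sparsity_le : sInf sparsities ≤ sInf hittingCards := by
    obtain ⟨s, hs, hle⟩ := exists_sparsity_le _ (Nat.sInf_mem hittingCards_nonempty)
    exact (Nat.sInf_le hs).trans hle
  have hittingCard_le : sInf hittingCards ≤ sInf sparsities :=
    Nat.sInf_le (sparsities_subset (Nat.sInf_mem sparsities_nonempty))
  exact ⟨sparsity_le.antisymm hittingCard_le, Nat.sInf_mem sparsities_nonempty,
    Nat.sInf_mem hittingCards_nonempty⟩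

end InfiniteDomain

/-- the minimum number of nonzero entries of a vector `b`
non-orthogonal to all the nonzero vectors `v j` equals the minimum cardinality
of a set `S` hitting the support of every `v j`, and both minima are attained. -/
theorem stmt_4 {n : ℕ} {J : Type*} [Fintype J] [Nonempty J]
    (v : J → Fin n → ℂ) (hv : ∀ j, v j ≠ 0) :
    sInf {m : ℕ | ∃ b : Fin n → ℂ,
        (∀ j : J, v j ⬝ᵥ b ≠ 0) ∧ {i | b i ≠ 0}.ncard = m}
      = sInf {m : ℕ | ∃ S : Set (Fin n),
        (∀ j : J, ∃ k ∈ S, v j k ≠ 0) ∧ S.ncard = m} ∧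
    sInf {m : ℕ | ∃ b : Fin n → ℂ,
        (∀ j : J, v j ⬝ᵥ b ≠ 0) ∧ {i | b i ≠ 0}.ncard = m}
      ∈ {m : ℕ | ∃ b : Fin n → ℂ,
        (∀ j : J, v j ⬝ᵥ b ≠ 0) ∧ {i | b i ≠ 0}.ncard = m} ∧
    sInf {m : ℕ | ∃ S : Set (Fin n),
        (∀ j : J, ∃ k ∈ S, v j k ≠ 0) ∧ S.ncard = m}
      ∈ {m : ℕ | ∃ S : Set (Fin n),
        (∀ j : J, ∃ k ∈ S, v j k ≠ 0) ∧ S.ncard = m} :=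
  stmt_4_general v hv
end

section
/- Let A : Matrix (Fin n) (Fin n) ℂ, let λ : Fin n → ℂ be pairwise distinct eigenvalues of A, and let w : Fin n → (Fin n → ℂ) be corresponding left eigenvectors, i.e., w j ≠ 0 and Matrix.vecMul (w j) A = λ j • w j for every j. Then for every b : Fin n → ℂ, the pair (A, b) is controllable if and only if w j ⬝ᵥ b ≠ 0 for every j : Fin n. -/
open Matrix

/-- The pair `(A, b)` is controllable if the Kalman rank condition holds:
the span of `A ^ k *ᵥ b`, `k = 0, …, n-1`, is all of `Fin n → ℂ`. -/
def Controllable {n : ℕ} (A : Matrix (Fin n) (Fin n) ℂ) (b : Fin n → ℂ) : Prop :=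
  Submodule.span ℂ (Set.range fun k : Fin n => (A ^ (k : ℕ)) *ᵥ b) = ⊤

/-!
Let `W` be the matrix with rows `w j`, `C` the matrix with columns `A ^ k *ᵥ b`, and `V` the
Vandermonde matrix of the eigenvalues. Since `w j ⬝ᵥ (A ^ k *ᵥ b) = lam j ^ k * (w j ⬝ᵥ b)`,
we have `W * C = diagonal (fun j => w j ⬝ᵥ b) * V`. Distinctness of the eigenvalues makes both
`W` and `V` invertible, so `C` is invertible exactly when the diagonal factor is.
-/

section CommSemiring

variable {ι R : Type*} [Fintype ι] [DecidableEq ι] [CommSemiring R]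

/-- The matrix with columns `b, A *ᵥ b, …, A ^ (n - 1) *ᵥ b`, called the controllability matrix of
`(A, b)` when `n` is the size of `A`. The number of columns is a separate parameter, so that `A` may
be indexed by any finite type. -/
def controllabilityMatrix (A : Matrix ι ι R) (b : ι → R) (n : ℕ) : Matrix ι (Fin n) R :=
  of fun i k => (A ^ (k : ℕ) *ᵥ b) i

theorem vecMul_pow_of_vecMul_eq_smul {A : Matrix ι ι R} {w : ι → R} {μ : R}
    (h : w ᵥ* A = μ • w) (k : ℕ) : w ᵥ* A ^ k = μ ^ k • w := by
  induction k with
  | zero => simp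
  | succ k ih => rw [pow_succ, ← vecMul_vecMul, ih, smul_vecMul, h, smul_smul, ← pow_succ]

end CommSemiring

section CommRing

variable {ι R : Type*} [Fintype ι] [CommRing R] {n : ℕ}

theorem of_mul_controllabilityMatrix [DecidableEq ι] {A : Matrix ι ι R} {lam : Fin n → R}
    {w : Fin n → ι → R} (heig : ∀ j, w j ᵥ* A = lam j • w j) (b : ι → R) :
    of w * controllabilityMatrix A b n = diagonal (fun j => w j ⬝ᵥ b) * vandermonde lam := by
  ext j k
  calc w j ⬝ᵥ (A ^ (k : ℕ) *ᵥ b)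
      = lam j ^ (k : ℕ) * (w j ⬝ᵥ b) := by
        rw [dotProduct_mulVec, vecMul_pow_of_vecMul_eq_smul (heig j), smul_dotProduct, smul_eq_mul]
    _ = (diagonal (fun j => w j ⬝ᵥ b) * vandermonde lam) j k := by
        rw [diagonal_mul, vandermonde_apply, mul_comm]

theorem span_range_pow_mulVec_eq_top_iff_isUnit (A : Matrix (Fin n) (Fin n) R) (b : Fin n → R) :
    Submodule.span R (Set.range fun k : Fin n => A ^ (k : ℕ) *ᵥ b) = ⊤ ↔
      IsUnit (controllabilityMatrix A b n) := by
  rw [← mulVec_surjective_iff_isUnit, ← coe_mulVecLin, ← LinearMap.range_eq_top, range_mulVecLin]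
  rfl

theorem isUnit_controllabilityMatrix_iff {A : Matrix (Fin n) (Fin n) R} {lam : Fin n → R}
    {w : Fin n → Fin n → R} (heig : ∀ j, w j ᵥ* A = lam j • w j) (hw : IsUnit (of w))
    (hlam : IsUnit (vandermonde lam)) (b : Fin n → R) :
    IsUnit (controllabilityMatrix A b n) ↔ ∀ j, IsUnit (w j ⬝ᵥ b) :=
  calc IsUnit (controllabilityMatrix A b n)
      ↔ IsUnit (of w * controllabilityMatrix A b n) := by simp only [IsUnit.mul_iff, hw, true_and]
    _ ↔ IsUnit (diagonal (fun j => w j ⬝ᵥ b) * vandermonde lam) := by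
        rw [of_mul_controllabilityMatrix heig]
    _ ↔ IsUnit (diagonal fun j => w j ⬝ᵥ b) := by simp only [IsUnit.mul_iff, hlam, and_true]
    _ ↔ ∀ j, IsUnit (w j ⬝ᵥ b) := by rw [isUnit_diagonal, Pi.isUnit_iff]

theorem linearIndependent_of_vecMul_eq_smul [IsDomain R] {κ : Type*} {A : Matrix ι ι R}
    {lam : κ → R} (hlam : Function.Injective lam) {w : κ → ι → R} (hw : ∀ j, w j ≠ 0)
    (heig : ∀ j, w j ᵥ* A = lam j • w j) : LinearIndependent R w :=
  Module.End.eigenvectors_linearIndependent' A.vecMulLinear lam hlam w fun j =>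
    ⟨Module.End.mem_eigenspace_iff.mpr (heig j), hw j⟩

end CommRing

theorem stmt_5_general {K : Type*} [Field K] {n : ℕ} {A : Matrix (Fin n) (Fin n) K}
    {lam : Fin n → K} (hlam : Function.Injective lam) {w : Fin n → Fin n → K} (hw : ∀ j, w j ≠ 0)
    (heig : ∀ j, w j ᵥ* A = lam j • w j) (b : Fin n → K) :
    Submodule.span K (Set.range fun k : Fin n => A ^ (k : ℕ) *ᵥ b) = ⊤ ↔
      ∀ j, w j ⬝ᵥ b ≠ 0 := by
  have hW : IsUnit (of w) :=
    linearIndependent_rows_iff_isUnit.mp (linearIndependent_of_vecMul_eq_smul hlam hw heig)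
  have hV : IsUnit (vandermonde lam) :=
    (isUnit_iff_isUnit_det _).mpr (det_vandermonde_ne_zero_iff.mpr hlam).isUnit
  rw [span_range_pow_mulVec_eq_top_iff_isUnit, isUnit_controllabilityMatrix_iff heig hW hV]
  simp only [isUnit_iff_ne_zero]

/-- PBH eigenvector test for a matrix with `n` distinct
eigenvalues and corresponding left eigenvectors `w j`. -/
theorem stmt_5 {n : ℕ} (A : Matrix (Fin n) (Fin n) ℂ) (lam : Fin n → ℂ)
    (w : Fin n → Fin n → ℂ)
    (hdist : ∀ j j' : Fin n, j ≠ j' → lam j ≠ lam j')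
    (hw : ∀ j, w j ≠ 0)
    (heig : ∀ j, Matrix.vecMul (w j) A = lam j • w j)
    (b : Fin n → ℂ) :
    Controllable A b ↔ ∀ j : Fin n, w j ⬝ᵥ b ≠ 0 :=
  stmt_5_general (Function.injective_iff_pairwise_ne.mpr fun j j' => hdist j j') hw heig b
end

section
/- Let A : Matrix (Fin n) (Fin n) ℂ and b : Fin n → ℂ. If the pair (A, b) is controllable, then every eigenvalue of A has geometric multiplicity one; that is, for every λ ∈ ℂ, the dimension over ℂ of the eigenspace {x : Fin n → ℂ | A *ᵥ x = λ • x} is at most 1. -/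
open Matrix

/-- The eigenspace `{x | A *ᵥ x = μ • x}` of a matrix, as a submodule. -/
noncomputable def matrixEigenspace {n : ℕ} (A : Matrix (Fin n) (Fin n) ℂ) (μ : ℂ) :
    Submodule ℂ (Fin n → ℂ) where
  carrier := {x : Fin n → ℂ | A *ᵥ x = μ • x}
  add_mem' := by
    intro x y hx hy
    simp only [Set.mem_setOf_eq] at *
    rw [Matrix.mulVec_add, hx, hy, smul_add]
  zero_mem' := by simp
  smul_mem' := by
    intro c x hx
    simp only [Set.mem_setOf_eq] at *
    rw [Matrix.mulVec_smul, hx, smul_comm]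

/-!
Modulo the range of `f - μ`, the endomorphism `f` acts as the scalar `μ`, so every power of `f` maps
a subspace `W` into `range (f - μ) ⊔ W`. If the images of `W` under the powers of `f` span the whole
space, then `W` therefore spans the cokernel of `f - μ`, which has the dimension of its kernel.
-/

section Endomorphism

open Module

theorem map_pow_le_range_sub_algebraMap_sup {R M : Type*} [CommRing R] [AddCommGroup M] [Module R M]
    (f : End R M) (W : Submodule R M) (μ : R) (k : ℕ) :
    W.map (f ^ k) ≤ LinearMap.range (f - algebraMap R (End R M) μ) ⊔ W := by
  rintro _ ⟨w, hw, rfl⟩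
  obtain ⟨q, hq⟩ := (Algebra.commute_algebraMap_right μ f).sub_dvd_pow_sub_pow k
  have pow_apply : (f ^ k) w = (f - algebraMap R (End R M) μ) (q w) + μ ^ k • w := by
    rw [← End.mul_apply, ← hq, ← map_pow, LinearMap.sub_apply, algebraMap_end_apply,
      sub_add_cancel]
  rw [pow_apply]
  exact Submodule.add_mem_sup (LinearMap.mem_range_self _ _) (W.smul_mem _ hw)

theorem finrank_ker_le_of_range_sup_eq_top {K V : Type*} [DivisionRing K] [AddCommGroup V]
    [Module K V] [FiniteDimensional K V] {g : End K V} {W : Submodule K V}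
    (h : LinearMap.range g ⊔ W = ⊤) : finrank K (LinearMap.ker g) ≤ finrank K W := by
  have rank_nullity := LinearMap.finrank_range_add_finrank_ker g
  have finrank_le : finrank K V ≤ finrank K (LinearMap.range g) + finrank K W := by
    rw [← finrank_top K V, ← h]
    exact Submodule.finrank_add_le_finrank_add_finrank (LinearMap.range g) W
  lia

/-- In control-theoretic terms, `W` is spanned by the columns of the input matrix, and `h` is the
controllability of a multi-input system. -/
theorem stmt_11_general {K V : Type*} [Field K] [AddCommGroup V] [Module K V]
    [FiniteDimensional K V] {f : End K V} {W : Submodule K V}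
    (h : ⨆ k : ℕ, W.map (f ^ k) = ⊤) (μ : K) :
    finrank K (f.eigenspace μ) ≤ finrank K W := by
  rw [End.eigenspace_def]
  refine finrank_ker_le_of_range_sup_eq_top (top_le_iff.mp ?_)
  exact h.ge.trans (iSup_le (map_pow_le_range_sub_algebraMap_sup f W μ))

end Endomorphism

section Matrix

variable {n : ℕ} (A : Matrix (Fin n) (Fin n) ℂ)

theorem matrixEigenspace_eq_eigenspace_toLin' (μ : ℂ) :
    matrixEigenspace A μ = Module.End.eigenspace (toLin' A) μ := by
  ext x
  rw [Module.End.mem_eigenspace_iff, toLin'_apply]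
  rfl

variable {A}

theorem Controllable.iSup_map_pow_toLin'_eq_top {b : Fin n → ℂ} (h : Controllable A b) :
    ⨆ k : ℕ, (Submodule.span ℂ {b}).map (toLin' A ^ k) = ⊤ := by
  rw [eq_top_iff, ← show _ = ⊤ from h, Submodule.span_le]
  rintro _ ⟨k, rfl⟩
  refine Submodule.mem_iSup_of_mem (k : ℕ) ⟨b, Submodule.mem_span_singleton_self b, ?_⟩
  rw [← toLin'_pow, toLin'_apply]

end Matrix

/-- if `(A, b)` is controllable (single input), every eigenvalue
of `A` has geometric multiplicity at most one. -/
theorem stmt_11 {n : ℕ} (A : Matrix (Fin n) (Fin n) ℂ) (b : Fin n → ℂ)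
    (h : Controllable A b) (μ : ℂ) :
    Module.finrank ℂ (matrixEigenspace A μ) ≤ 1 := by
  have finrank_span_le_one : Module.finrank ℂ (Submodule.span ℂ {b}) ≤ 1 := by
    simpa using finrank_span_le_card (R := ℂ) {b}
  rw [matrixEigenspace_eq_eigenspace_toLin']
  exact (stmt_11_general h.iSup_map_pow_toLin'_eq_top μ).trans finrank_span_le_one
end

section
/- Let (P_A, P_b) with P_A ⊆ Fin n × Fin n and P_b ⊆ Fin n be a structurally controllable sparsity pattern. For a : P_A → ℂ and c : P_b → ℂ, let A_a : Matrix (Fin n) (Fin n) ℂ be the matrix with (A_a) i j = a (i, j) for (i, j) ∈ P_A and (A_a) i j = 0 otherwise, and let b_c : Fin n → ℂ be c on P_b and 0 outside P_b. Then the set of pairs (a, c) ∈ (P_A → ℂ) × (P_b → ℂ) for which the pair (A_a, b_c) is NOT controllable has Lebesgue measure zero with respect to the product measure; i.e., almost all realizations respecting a structurally controllable pattern are controllable. -/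
open Matrix MeasureTheory

/-- `(A, b)` realizes the sparsity pattern `(PA, Pb)`. -/
def Realizes {n : ℕ} (PA : Set (Fin n × Fin n)) (Pb : Set (Fin n))
    (A : Matrix (Fin n) (Fin n) ℂ) (b : Fin n → ℂ) : Prop :=
  (∀ i j, A i j ≠ 0 ↔ (i, j) ∈ PA) ∧ (∀ i, b i ≠ 0 ↔ i ∈ Pb)

/-- A sparsity pattern is structurally controllable if some realization of it
is controllable. -/
def StructurallyControllable {n : ℕ} (PA : Set (Fin n × Fin n))
    (Pb : Set (Fin n)) : Prop :=
  ∃ A b, Realizes PA Pb A b ∧ Controllable A b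

/-!
The Kalman determinant `det (b, A b, …, A ^ (n - 1) b)` is a polynomial in the free entries of the
pattern, and it is a nonzero polynomial as soon as one choice of these entries is controllable. A
nonzero polynomial vanishes only on a null set, by Fubini and the finiteness of the set of roots of
a nonzero polynomial in one variable.
-/

section PolynomialZeros

theorem measurable_mvPolynomial_eval {σ R : Type*} [CommSemiring R] [MeasurableSpace R]
    [MeasurableAdd₂ R] [MeasurableMul₂ R] (p : MvPolynomial σ R) :
    Measurable fun x : σ → R => MvPolynomial.eval x p := by
  simp only [MvPolynomial.eval_eq]
  fun_prop

variable {R : Type*} [CommRing R] [IsDomain R] [MeasurableSpace R] [MeasurableAdd₂ R]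
  [MeasurableMul₂ R] [MeasurableSingletonClass R]

theorem ae_mvPolynomial_eval_ne_zero_fin {n : ℕ} (μ : Fin n → Measure R)
    [∀ i, SigmaFinite (μ i)] [∀ i, NullSingletonClass (μ i)]
    {p : MvPolynomial (Fin n) R} (hp : p ≠ 0) :
    ∀ᵐ x ∂Measure.pi μ, MvPolynomial.eval x p ≠ 0 := by
  induction n with
  | zero =>
    refine .of_forall fun x hx => hp (MvPolynomial.funext_set (fun _ => Set.univ) (by simp) ?_)
    intro y _
    rw [Subsingleton.elim y x, hx, map_zero]
  | succ n ih =>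
    -- Substituting a constant for the first variable kills `p` for finitely many constants only.
    set q := MvPolynomial.finSuccEquiv R n p
    have hq : q ≠ 0 := (map_ne_zero_iff _ (MvPolynomial.finSuccEquiv R n).injective).2 hp
    have hfinite : {y : R | q.eval (MvPolynomial.C y) = 0}.Finite :=
      (Polynomial.finite_setOfPred_isRoot hq).preimage (MvPolynomial.C_injective _ _).injOn
    have hfiber : ∀ᵐ y ∂μ 0, ∀ᵐ x ∂Measure.pi fun i => μ (Fin.succ i),
        MvPolynomial.eval (Fin.cons y x) p ≠ 0 := by
      filter_upwards [hfinite.countable.ae_notMem (μ 0)] with y hy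
      filter_upwards [ih (fun i => μ i.succ) hy] with x hx
      rwa [MvPolynomial.eval_polynomial_eval_finSuccEquiv, MvPolynomial.eval_C] at hx
    have hcons := (measurePreserving_piFinSuccAbove μ 0).symm
    have hmeas : MeasurableSet {x | MvPolynomial.eval x p ≠ 0} :=
      measurable_mvPolynomial_eval p (measurableSet_singleton 0).compl
    rw [← hcons.map_eq, ae_map_iff hcons.aemeasurable hmeas]
    refine (Measure.ae_prod_iff_ae_ae (hcons.measurable hmeas)).2 ?_
    simpa [Fin.consEquiv] using hfiber

theorem ae_mvPolynomial_eval_ne_zero {σ : Type*} [Fintype σ] (μ : σ → Measure R)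
    [∀ i, SigmaFinite (μ i)] [∀ i, NullSingletonClass (μ i)] {p : MvPolynomial σ R} (hp : p ≠ 0) :
    ∀ᵐ x ∂Measure.pi μ, MvPolynomial.eval x p ≠ 0 := by
  let e := (Fintype.equivFin σ).symm
  have hrename : MvPolynomial.rename e.symm p ≠ 0 :=
    (map_ne_zero_iff _ (MvPolynomial.rename_injective _ e.symm.injective)).2 hp
  have hreindex := (measurePreserving_piCongrLeft μ e).symm.quasiMeasurePreserving
  filter_upwards [hreindex.ae (ae_mvPolynomial_eval_ne_zero_fin (fun i => μ (e i)) hrename)]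
    with x hx
  have hcomp : (MeasurableEquiv.piCongrLeft (fun _ => R) e).symm x ∘ e.symm = x :=
    funext fun i => congrArg x (e.apply_symm_apply i)
  rwa [MvPolynomial.eval_rename, hcomp] at hx

theorem ae_mvPolynomial_eval_sumElim_ne_zero {σ τ : Type*} [Fintype σ] [Fintype τ]
    (μ : σ → Measure R) (ν : τ → Measure R) [∀ i, SigmaFinite (μ i)] [∀ j, SigmaFinite (ν j)]
    [∀ i, NullSingletonClass (μ i)] [∀ j, NullSingletonClass (ν j)]
    {p : MvPolynomial (σ ⊕ τ) R} (hp : p ≠ 0) :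
    ∀ᵐ x ∂(Measure.pi μ).prod (Measure.pi ν), MvPolynomial.eval (Sum.elim x.1 x.2) p ≠ 0 := by
  have : ∀ k, SigmaFinite (Sum.elim μ ν k) := Sum.rec ‹_› ‹_›
  have : ∀ k, NullSingletonClass (Sum.elim μ ν k) := Sum.rec ‹_› ‹_›
  exact (measurePreserving_sumPiEquivProdPi_symm (Sum.elim μ ν)).quasiMeasurePreserving.ae
    (ae_mvPolynomial_eval_ne_zero (Sum.elim μ ν) hp)

end PolynomialZeros

section KalmanMatrix

variable {n : ℕ}

/-- The transposed Kalman controllability matrix: its `k`-th row, rather than its `k`-th column, is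
`A ^ k *ᵥ b`. It is defined over any semiring so that it can be formed for a matrix of
indeterminates. -/
def kalmanMatrix {R : Type*} [Semiring R] (A : Matrix (Fin n) (Fin n) R) (b : Fin n → R) :
    Matrix (Fin n) (Fin n) R :=
  Matrix.of fun k => (A ^ (k : ℕ)) *ᵥ b

theorem kalmanMatrix_map {R S : Type*} [Semiring R] [Semiring S] (f : R →+* S)
    (A : Matrix (Fin n) (Fin n) R) (b : Fin n → R) :
    (kalmanMatrix A b).map f = kalmanMatrix (A.map f) (f ∘ b) := by
  ext k i
  simp only [kalmanMatrix, Matrix.map_apply, Matrix.of_apply, RingHom.map_mulVec, Matrix.map_pow]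

theorem controllable_iff_det_kalmanMatrix_ne_zero (A : Matrix (Fin n) (Fin n) ℂ) (b : Fin n → ℂ) :
    Controllable A b ↔ (kalmanMatrix A b).det ≠ 0 := by
  rw [← isUnit_iff_ne_zero, ← Matrix.isUnit_iff_isUnit_det,
    ← Matrix.linearIndependent_rows_iff_isUnit]
  exact ⟨fun h => linearIndependent_of_top_le_span_of_card_eq_finrank h.ge (by simp),
    fun h => h.span_eq_top_of_card_eq_finrank' (by simp)⟩

end KalmanMatrix

section Pattern

variable {ι κ R S F : Type*} [DecidableEq ι] [DecidableEq κ] [Zero R] [Zero S]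
  [FunLike F R S] [ZeroHomClass F R S]

/-- The vector with entries `c` on the pattern `P` and zeros elsewhere, which parametrizes the
vectors supported in `P`. The values of `c` are allowed to vanish. -/
def patternVector (P : Finset ι) (c : P → R) : ι → R :=
  fun i => if h : i ∈ P then c ⟨i, h⟩ else 0

/-- The matrix with entries `a` on the pattern `P` and zeros elsewhere, which parametrizes the
matrices supported in `P`. The values of `a` are allowed to vanish. -/
def patternMatrix (P : Finset (ι × κ)) (a : P → R) : Matrix ι κ R :=
  Matrix.of fun i j => if h : (i, j) ∈ P then a ⟨(i, j), h⟩ else 0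

theorem comp_patternVector (P : Finset ι) (c : P → R) (f : F) :
    f ∘ patternVector P c = patternVector P (f ∘ c) := by
  ext i
  by_cases h : i ∈ P <;> simp [patternVector, h]

theorem patternMatrix_map (P : Finset (ι × κ)) (a : P → R) (f : F) :
    (patternMatrix P a).map f = patternMatrix P (f ∘ a) := by
  ext i j
  by_cases h : (i, j) ∈ P <;> simp [patternMatrix, h]

theorem patternVector_restrict {P : Finset ι} {b : ι → R} (hb : ∀ i, b i ≠ 0 → i ∈ P) :
    patternVector P (fun i => b i) = b := by
  ext i
  by_cases h : i ∈ P
  · simp [patternVector, h]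
  · simp [patternVector, h, not_imp_comm.1 (hb i) h]

theorem patternMatrix_restrict {P : Finset (ι × κ)} {A : Matrix ι κ R}
    (hA : ∀ i j, A i j ≠ 0 → (i, j) ∈ P) :
    patternMatrix P (fun ij => A ij.1.1 ij.1.2) = A := by
  ext i j
  by_cases h : (i, j) ∈ P
  · simp [patternMatrix, h]
  · simp [patternMatrix, h, not_imp_comm.1 (hA i j) h]

end Pattern

section PatternKalman

theorem StructurallyControllable.exists_controllable_pattern {n : ℕ}
    {PA : Finset (Fin n × Fin n)} {Pb : Finset (Fin n)}
    (h : StructurallyControllable (PA : Set (Fin n × Fin n)) (Pb : Set (Fin n))) :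
    ∃ a c, Controllable (patternMatrix PA a) (patternVector Pb c) := by
  obtain ⟨A, b, ⟨hA, hb⟩, hcontrollable⟩ := h
  refine ⟨fun ij => A ij.1.1 ij.1.2, fun i => b i, ?_⟩
  rwa [patternMatrix_restrict fun i j => (hA i j).1, patternVector_restrict fun i => (hb i).1]

variable {n : ℕ} (PA : Finset (Fin n × Fin n)) (Pb : Finset (Fin n))

/-- The Kalman determinant of the generic pair with sparsity pattern `(PA, Pb)`, as a polynomial
in the free entries. `Sum.inl` indexes those of the matrix and `Sum.inr` those of the vector. -/
noncomputable def kalmanPolynomial (R : Type*) [CommRing R] : MvPolynomial (PA ⊕ Pb) R :=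
  (kalmanMatrix (patternMatrix PA fun ij => MvPolynomial.X (Sum.inl ij))
    (patternVector Pb fun i => MvPolynomial.X (Sum.inr i))).det

theorem eval_kalmanPolynomial {R : Type*} [CommRing R] (a : PA → R) (c : Pb → R) :
    MvPolynomial.eval (Sum.elim a c) (kalmanPolynomial PA Pb R) =
      (kalmanMatrix (patternMatrix PA a) (patternVector Pb c)).det := by
  rw [kalmanPolynomial, RingHom.map_det, RingHom.mapMatrix_apply, kalmanMatrix_map,
    patternMatrix_map, comp_patternVector]
  congr <;> ext <;> simp

theorem stmt_12_general (μ : PA → Measure ℂ) (ν : Pb → Measure ℂ)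
    [∀ ij, SigmaFinite (μ ij)] [∀ i, SigmaFinite (ν i)]
    [∀ ij, NullSingletonClass (μ ij)] [∀ i, NullSingletonClass (ν i)]
    (h : ∃ a c, Controllable (patternMatrix PA a) (patternVector Pb c)) :
    ∀ᵐ p ∂(Measure.pi μ).prod (Measure.pi ν),
      Controllable (patternMatrix PA p.1) (patternVector Pb p.2) := by
  simp only [controllable_iff_det_kalmanMatrix_ne_zero, ← eval_kalmanPolynomial] at h ⊢
  obtain ⟨a, c, hac⟩ := h
  have hpoly : kalmanPolynomial PA Pb ℂ ≠ 0 := fun h0 => hac (by rw [h0, map_zero])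
  exact ae_mvPolynomial_eval_sumElim_ne_zero μ ν hpoly

end PatternKalman

/-- for a structurally controllable sparsity pattern, the set of
numerical realizations (parametrized by their values on the pattern) that are
not controllable has Lebesgue measure zero. -/
theorem stmt_12 {n : ℕ} (PA : Finset (Fin n × Fin n)) (Pb : Finset (Fin n))
    (hsc : StructurallyControllable (PA : Set (Fin n × Fin n))
      (Pb : Set (Fin n))) :
    volume {p : (↥PA → ℂ) × (↥Pb → ℂ) |
      ¬ Controllable
          (Matrix.of fun i j : Fin n =>
            if h : (i, j) ∈ PA then p.1 ⟨(i, j), h⟩ else 0)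
          (fun i : Fin n => if h : i ∈ Pb then p.2 ⟨i, h⟩ else 0)} = 0 := by
  exact ae_iff.1 <| stmt_12_general PA Pb (fun _ => volume) (fun _ => volume)
    hsc.exists_controllable_pattern
end
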